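/- arXiv:2508.17479 — 6 statements merged into one kernel-verified Lean document; each statement's English description precedes it below -/
import Mathlib

section
/- Let m ≤ n be positive integers and let W be the m × m Vandermonde matrix whose evaluation points α_1, …, α_m are distinct n-th roots of unity in ℂ. Then the spectral norm of W satisfies ‖W‖₂ ≤ √n. -/
open scoped Matrix.Norms.L2Operator

/-- Let `m ≤ n` be positive integers and let `W` be the `m × m` Vandermonde matrix whose
evaluation points are distinct `n`-th roots of unity. Then `‖W‖₂ ≤ √n`. -/
theorem vandermonde_roots_of_unity_opNorm_le (m n : ℕ) (hm : 0 < m) (hmn : m ≤ n)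
    (α : Fin m → ℂ) (hroot : ∀ i, α i ^ n = 1) (hinj : Function.Injective α) :
    ‖Matrix.vandermonde α‖ ≤ Real.sqrt n := by
  classical
  have hn : n ≠ 0 := by omega
  haveI : Nonempty (Fin m) := ⟨⟨0, hm⟩⟩
  have hnorm : ∀ i, ‖α i‖ = 1 := fun i => Complex.norm_eq_one_of_pow_eq_one (hroot i) hn
  have hself : ∀ i, α i * star (α i) = 1 := by
    intro i
    have h := Complex.mul_conj (α i)
    rw [Complex.normSq_eq_norm_sq, hnorm] at h
    simpa using h
  -- the rectangular Vandermonde matrix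
  let R : Matrix (Fin m) (Fin n) ℂ := Matrix.of fun i j => α i ^ (j : ℕ)
  -- the inclusion of the first `m` coordinates
  let P : Matrix (Fin n) (Fin m) ℂ := Matrix.of fun j k => if j = Fin.castLE hmn k then 1 else 0
  have hW : Matrix.vandermonde α = R * P := by
    ext i k
    simp [R, P, Matrix.mul_apply, Matrix.vandermonde_apply]
  have hR : R * R.conjTranspose = Matrix.diagonal (fun _ => (n : ℂ)) := by
    ext i k
    have h1 : (R * R.conjTranspose) i k = ∑ j ∈ Finset.range n, (α i * star (α k)) ^ j := by
      rw [← Fin.sum_univ_eq_sum_range (fun j => (α i * star (α k)) ^ j)]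
      simp [R, Matrix.mul_apply, mul_pow]
    rw [h1]
    by_cases hik : i = k
    · subst hik
      rw [hself]
      simp
    · rw [Matrix.diagonal_apply_ne _ hik]
      have hz : α i * star (α k) ≠ 1 := by
        intro h
        apply hik
        apply hinj
        calc α i = α i * (α k * star (α k)) := by rw [hself, mul_one]
          _ = (α i * star (α k)) * α k := by ring
          _ = α k := by rw [h, one_mul]
      rw [geom_sum_eq hz, mul_pow, ← star_pow, hroot, hroot]
      simp
  have hP : P.conjTranspose * P = 1 := by
    ext i k
    simp [P, Matrix.mul_apply, Matrix.one_apply, eq_comm]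
  have nP : ‖P‖ = 1 := by
    have h := Matrix.l2_opNorm_conjTranspose_mul_self P
    rw [hP, norm_one] at h
    nlinarith [norm_nonneg P]
  have nR : ‖R‖ = Real.sqrt n := by
    have h := Matrix.l2_opNorm_conjTranspose_mul_self R.conjTranspose
    rw [Matrix.conjTranspose_conjTranspose, hR, Matrix.l2_opNorm_diagonal,
      Matrix.l2_opNorm_conjTranspose, pi_norm_const, Complex.norm_natCast] at h
    rw [h, Real.sqrt_mul_self (norm_nonneg _)]
  rw [hW]
  calc ‖R * P‖ ≤ ‖R‖ * ‖P‖ := Matrix.l2_opNorm_mul R P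
    _ = Real.sqrt n := by rw [nP, nR, mul_one]
end

section
/- Let m ≤ n be positive integers, d = n − m, and let α_1, …, α_m be distinct n-th roots of unity, say α_j = ω_n^{k_j} with 0 ≤ k_1 < ⋯ < k_m < n. Then for every j ∈ {1, …, m}, the product of distances satisfies ∏_{j' ≠ j} |α_j − α_{j'}| ≥ n / 2^d. Equivalently, the diagonal matrix A with entries A_{jj} = ∏_{j' ≠ j} (α_j − α_{j'})^{−1} satisfies ‖A‖₂ = max_j |A_{jj}| ≤ 2^d / n. -/
open Finset
open scoped Matrix.Norms.L2Operator

theorem norm_prod_roots_aux (n : ℕ) (hn : 0 < n) (a : ℂ) (ha : a ^ n = 1) :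
    ∏ z ∈ (Polynomial.nthRootsFinset n (1 : ℂ)).erase a, ‖a - z‖ = n := by
  have haR : a ∈ Polynomial.nthRootsFinset n (1 : ℂ) :=
    (Polynomial.mem_nthRootsFinset hn 1).2 ha
  have h1 := Polynomial.X_pow_sub_one_eq_prod hn (Complex.isPrimitiveRoot_exp n hn.ne')
  have h2 := Lagrange.eval_nodal_derivative_eval_node_eq (v := (id : ℂ → ℂ)) haR
  have h3 : Lagrange.nodal (Polynomial.nthRootsFinset n (1 : ℂ)) id
      = (Polynomial.X ^ n - 1 : Polynomial ℂ) := by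
    rw [h1]; rfl
  rw [h3, Lagrange.eval_nodal] at h2
  have hna : ‖a‖ = 1 := Complex.norm_eq_one_of_pow_eq_one ha hn.ne'
  have h4 := congrArg norm h2
  simp [hna, Polynomial.derivative_X_pow] at h4
  exact h4.symm

theorem prod_dist_aux (m n : ℕ) (hm : 0 < m) (hmn : m ≤ n)
    (α : Fin m → ℂ) (hroot : ∀ i, α i ^ n = 1) (hinj : Function.Injective α) (j : Fin m) :
    (n : ℝ) / 2 ^ (n - m) ≤ ∏ j' ∈ univ.erase j, ‖α j - α j'‖ := by
  have hn : 0 < n := hm.trans_le hmn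
  set R := Polynomial.nthRootsFinset n (1 : ℂ) with hR
  have hmem : ∀ z, z ∈ R ↔ z ^ n = 1 := fun z => Polynomial.mem_nthRootsFinset hn 1
  have hcard : R.card = n := (Complex.isPrimitiveRoot_exp n hn.ne').card_nthRootsFinset
  have hsub : univ.image α ⊆ R := by
    intro z hz
    obtain ⟨i, -, rfl⟩ := mem_image.1 hz
    exact (hmem _).2 (hroot i)
  have himg : ∏ j' ∈ univ.erase j, ‖α j - α j'‖
      = ∏ z ∈ (univ.image α).erase (α j), ‖α j - z‖ := by
    rw [← image_erase hinj, prod_image (fun _ _ _ _ h => hinj h)]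
  have hsplit := prod_sdiff (f := fun z => ‖α j - z‖)
    (erase_subset_erase (α j) hsub)
  rw [norm_prod_roots_aux n hn (α j) (hroot j), ← himg] at hsplit
  have hc : (R.erase (α j) \ (univ.image α).erase (α j)).card = n - m := by
    rw [card_sdiff_of_subset (erase_subset_erase (α j) hsub),
      card_erase_of_mem ((hmem _).2 (hroot j)),
      card_erase_of_mem (mem_image_of_mem α (mem_univ j)), card_image_of_injective _ hinj,
      hcard, card_univ, Fintype.card_fin]
    omega
  have hle : ∏ z ∈ R.erase (α j) \ (univ.image α).erase (α j), ‖α j - z‖ ≤ 2 ^ (n - m) := by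
    rw [← hc]
    rw [← prod_const]
    refine prod_le_prod (fun _ _ => norm_nonneg _) ?_
    intro z hz
    have hz' : z ^ n = 1 := (hmem z).1 (mem_of_mem_erase (mem_sdiff.1 hz).1)
    have e1 : ‖α j‖ = 1 := Complex.norm_eq_one_of_pow_eq_one (hroot j) hn.ne'
    have e2 : ‖z‖ = 1 := Complex.norm_eq_one_of_pow_eq_one hz' hn.ne'
    have := norm_sub_le (α j) z
    linarith
  rw [div_le_iff₀ (by positivity), ← hsplit, mul_comm]
  exact mul_le_mul_of_nonneg_left hle (prod_nonneg fun _ _ => norm_nonneg _)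

/-- For distinct `n`-th roots of unity `α 1, …, α m` with `m ≤ n` and `d = n − m`:
the product of distances `∏_{j' ≠ j} |α j − α j'| ≥ n / 2^d` for every `j`, and the diagonal
matrix `A` with `A jj = ∏_{j' ≠ j} (α j − α j')⁻¹` satisfies `‖A‖₂ ≤ 2^d / n`. -/
theorem prod_dist_roots_of_unity_lower_bound (m n : ℕ) (hm : 0 < m) (hmn : m ≤ n)
    (α : Fin m → ℂ) (hroot : ∀ i, α i ^ n = 1) (hinj : Function.Injective α) :
    (∀ j : Fin m,
      (n : ℝ) / 2 ^ (n - m) ≤ ∏ j' ∈ univ.erase j, ‖α j - α j'‖) ∧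
    ‖(Matrix.diagonal fun j => (∏ j' ∈ univ.erase j, (α j - α j'))⁻¹ :
        Matrix (Fin m) (Fin m) ℂ)‖ ≤ 2 ^ (n - m) / n := by
  have hn : (0 : ℝ) < n := by exact_mod_cast hm.trans_le hmn
  have key := prod_dist_aux m n hm hmn α hroot hinj
  refine ⟨key, ?_⟩
  rw [Matrix.l2_opNorm_diagonal, pi_norm_le_iff_of_nonneg (by positivity)]
  intro j
  rw [norm_inv, norm_prod, ← inv_div]
  exact inv_anti₀ (by positivity) (key j)
end

section
/- Let m ≤ n be positive integers, d = n − m, let α_1, …, α_m be distinct n-th roots of unity, and let β_i = ω_{2mn} · ω_m^{i−1} for i ∈ {1, …, m}. Let C be the m × m matrix with entries C_{ij} = ∏_{j' ≠ j} (β_i − α_{j'}). Then every entry of C satisfies |C_{ij}| ≤ m n^{d+1} / (2^d · d!). -/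
open Finset

lemma prod_lower_aux {ι : Type*} [DecidableEq ι] (f : ι → ℝ) (a : ℝ) (c : ℝ) (ha : 0 ≤ a)
    (hc : 0 ≤ c) (d : ℕ) : ∀ (S : Finset ι), S.card = d + 1 → (∀ s ∈ S, a ≤ f s) →
    (∀ k : ℕ, (S.filter (fun s => f s < c * k)).card ≤ k) →
    a * (c ^ d * (d.factorial : ℝ)) ≤ ∏ s ∈ S, f s := by
  induction d with
  | zero =>
    intro S hS h1 _
    obtain ⟨s, rfl⟩ := Finset.card_eq_one.mp hS
    simpa using h1 s (by simp)
  | succ d ih =>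
    intro S hS h1 h2
    have : ∃ s ∈ S, c * ((d + 1 : ℕ) : ℝ) ≤ f s := by
      by_contra! h
      have := h2 (d + 1)
      rw [Finset.filter_true_of_mem h] at this
      omega
    obtain ⟨s, hs, hfs⟩ := this
    have key := ih (S.erase s) (by rw [Finset.card_erase_of_mem hs]; omega)
      (fun t ht => h1 t (Finset.mem_of_mem_erase ht))
      (fun k => le_trans (Finset.card_le_card
        (Finset.filter_subset_filter _ (Finset.erase_subset _ _))) (h2 k))
    rw [← Finset.mul_prod_erase S f hs]
    have : a * (c ^ (d + 1) * ((d + 1).factorial : ℝ)) =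
        (c * ((d + 1 : ℕ) : ℝ)) * (a * (c ^ d * (d.factorial : ℝ))) := by
      rw [Nat.factorial_succ]; push_cast; ring
    rw [this]
    have h0 : 0 ≤ c * ((d + 1 : ℕ) : ℝ) := by positivity
    exact mul_le_mul hfs key (by positivity) (h0.trans hfs)

lemma norm_lower_aux (n : ℕ) (hn : 0 < n) (x : ℝ) (z : ℂ) (hz : z ^ n = 1) :
    ∃ y : ℤ, z = Complex.exp (2 * Real.pi * Complex.I * y / n) ∧
      4 / n * |x - y| ≤ ‖Complex.exp (2 * Real.pi * Complex.I * x / n) - z‖ := by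
  have hn' : (n : ℝ) ≠ 0 := by positivity
  have hnc : (n : ℂ) ≠ 0 := by exact_mod_cast hn.ne'
  have : NeZero n := ⟨hn.ne'⟩
  obtain ⟨k, _, hk⟩ := (Complex.isPrimitiveRoot_exp n hn.ne').eq_pow_of_pow_eq_one hz
  set l : ℤ := round ((x - k) / n) with hl
  have hr := abs_sub_round ((x - k) / n)
  rw [← hl] at hr
  have hzy : z = Complex.exp (2 * Real.pi * Complex.I * ((k + n * l : ℤ) : ℂ) / n) := by
    rw [← hk, ← Complex.exp_nat_mul, Complex.exp_eq_exp_iff_exists_int]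
    refine ⟨-l, ?_⟩
    push_cast
    field_simp
    ring
  refine ⟨k + n * l, hzy, ?_⟩
  set y : ℤ := k + n * l with hy
  have hxy : |(x - y) / n| ≤ 1 / 2 := by
    have e0 : (x - y) / n = (x - k) / n - l := by
      rw [hy]; push_cast; field_simp; ring
    rw [e0]; exact hr
  have e1 : Complex.exp (2 * Real.pi * Complex.I * x / n) - z =
      z * (Complex.exp (Complex.I * ((2 * Real.pi * ((x - y) / n) : ℝ) : ℂ)) - 1) := by
    rw [mul_sub, hzy, ← Complex.exp_add, mul_one]
    congr 2
    push_cast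
    field_simp
    ring
  have nz : ‖z‖ = 1 := Complex.norm_eq_one_of_pow_eq_one hz hn.ne'
  rw [e1, norm_mul, nz, one_mul, Complex.norm_exp_I_mul_ofReal_sub_one]
  have e2 : 2 * Real.pi * ((x - y) / n) / 2 = Real.pi * ((x - y) / n) := by ring
  rw [e2, norm_mul, Real.norm_eq_abs, Real.norm_eq_abs]
  have := Real.mul_abs_le_abs_sin (x := Real.pi * ((x - y) / n)) (by
    rw [abs_mul, abs_of_pos Real.pi_pos]; nlinarith [Real.pi_pos])
  rw [abs_mul, abs_of_pos Real.pi_pos] at this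
  have e3 : 2 / Real.pi * (Real.pi * |(x - y) / n|) = 2 / n * |x - y| := by
    rw [abs_div, abs_of_pos (show (0:ℝ) < n by positivity)]
    have := Real.pi_pos.ne'
    field_simp
  rw [e3] at this
  rw [abs_of_pos (show (0:ℝ) < 2 by norm_num)]
  calc 4 / (n:ℝ) * |x - y| = 2 * (2 / n * |x - y|) := by ring
    _ ≤ _ := by linarith

/-- With `α 1, …, α m` distinct `n`-th roots of unity (`m ≤ n`, `d = n − m`) and
`β i = ω_{2mn} · ω_m^{i−1}`, the matrix `C` with `C i j = ∏_{j' ≠ j} (β i − α j')`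
satisfies `|C i j| ≤ m n^{d+1} / (2^d d!)` for all entries. -/
theorem C_matrix_entry_bound (m n : ℕ) (hm : 0 < m) (hmn : m ≤ n)
    (α : Fin m → ℂ) (hroot : ∀ i, α i ^ n = 1) (hinj : Function.Injective α)
    (β : Fin m → ℂ)
    (hβ : ∀ i : Fin m, β i =
      Complex.exp (2 * Real.pi * Complex.I / (2 * m * n)) *
        Complex.exp (2 * Real.pi * Complex.I / m) ^ (i : ℕ)) :
    ∀ i j : Fin m,
      ‖∏ j' ∈ univ.erase j, (β i - α j')‖ ≤
        m * (n : ℝ) ^ (n - m + 1) / (2 ^ (n - m) * (Nat.factorial (n - m))) := by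
  intro i j
  have hn : 0 < n := hm.trans_le hmn
  have hmR : (0 : ℝ) < m := by exact_mod_cast hm
  have hnR : (0 : ℝ) < n := by exact_mod_cast hn
  have hmC : (m : ℂ) ≠ 0 := by exact_mod_cast hm.ne'
  have hnC : (n : ℂ) ≠ 0 := by exact_mod_cast hn.ne'
  set x : ℝ := 1 / (2 * m) + i * n / m with hx
  have hb : β i = Complex.exp (2 * Real.pi * Complex.I * x / n) := by
    rw [hβ, ← Complex.exp_nat_mul, ← Complex.exp_add, hx]
    congr 1
    push_cast
    field_simp
  have hsep : ∀ y : ℤ, 1 / (2 * m) ≤ |x - y| := by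
    intro y
    have e : x - y = ((1 + 2 * (i * n - m * y) : ℤ) : ℝ) / (2 * m) := by
      rw [hx]; push_cast; field_simp; ring
    rw [e, abs_div, abs_of_pos (show (0:ℝ) < 2 * m by positivity)]
    gcongr
    rw [← Int.cast_abs]
    exact_mod_cast Int.one_le_abs (by omega)
  have hbn : ‖β i‖ = 1 := by
    rw [hb, show 2 * Real.pi * Complex.I * x / n = ((2 * Real.pi * x / n : ℝ) : ℂ) * Complex.I by
      push_cast; ring]
    exact Complex.norm_exp_ofReal_mul_I _
  set R : Finset ℂ := Polynomial.nthRootsFinset n (1 : ℂ) with hR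
  have hprim := Complex.isPrimitiveRoot_exp n hn.ne'
  have hRcard : R.card = n := hprim.card_nthRootsFinset
  have hRmem : ∀ z ∈ R, z ^ n = 1 := fun z hz => (Polynomial.mem_nthRootsFinset hn _).1 hz
  have hRprod : ∏ z ∈ R, (β i - z) = β i ^ n - 1 := by
    have := congrArg (Polynomial.eval (β i)) (Polynomial.X_pow_sub_one_eq_prod hn hprim)
    simpa [Polynomial.eval_prod] using this.symm
  set T : Finset ℂ := (univ.erase j).image α with hT
  have hTR : T ⊆ R := by
    intro z hz
    obtain ⟨k, _, rfl⟩ := Finset.mem_image.1 hz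
    exact (Polynomial.mem_nthRootsFinset hn _).2 (hroot k)
  have hTcard : T.card = m - 1 := by
    rw [hT, Finset.card_image_of_injective _ hinj, Finset.card_erase_of_mem (mem_univ _)]
    simp
  have hScard : (R \ T).card = (n - m) + 1 := by
    rw [Finset.card_sdiff_of_subset hTR, hRcard, hTcard]; omega
  have hTprod : ∏ j' ∈ univ.erase j, (β i - α j') = ∏ z ∈ T, (β i - z) := by
    rw [hT, Finset.prod_image (fun a _ b _ h => hinj h)]
  have hlow := prod_lower_aux (fun z : ℂ => ‖β i - z‖) (2 / (m * n)) (2 / n) (by positivity)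
    (by positivity) (n - m) (R \ T) hScard (by
      intro z hz
      obtain ⟨y, _, hy⟩ := norm_lower_aux n hn x z (hRmem z (Finset.mem_sdiff.1 hz).1)
      rw [← hb] at hy
      refine le_trans ?_ hy
      calc 2 / ((m : ℝ) * n) = 4 / n * (1 / (2 * m)) := by field_simp; norm_num
        _ ≤ _ := by gcongr; exact hsep y) (by
      intro k
      set a : ℤ := ⌊x - k / 2⌋ + 1 with ha
      have hsub : (R \ T).filter (fun z => ‖β i - z‖ < 2 / n * k) ⊆
          (Finset.Ico a (a + k)).image
            (fun y : ℤ => Complex.exp (2 * Real.pi * Complex.I * y / n)) := by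
        intro z hz
        rw [Finset.mem_filter] at hz
        obtain ⟨y, hzy, hy⟩ := norm_lower_aux n hn x z (hRmem z (Finset.mem_sdiff.1 hz.1).1)
        rw [← hb] at hy
        have h3 := lt_of_le_of_lt hy hz.2
        have h4 : |x - y| < k / 2 := by
          have : 4 / (n : ℝ) * |x - y| < 4 / n * (k / 2) := by
            calc _ < _ := h3
              _ = _ := by ring
          exact lt_of_mul_lt_mul_left this (by positivity)
        rw [abs_lt] at h4
        refine Finset.mem_image.2 ⟨y, Finset.mem_Ico.2 ⟨?_, ?_⟩, hzy.symm⟩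
        · rw [ha, Int.add_one_le_iff, Int.floor_lt]; linarith
        · have := Int.lt_floor_add_one (x - k / 2)
          have : (y : ℝ) < ((a + k : ℤ) : ℝ) := by
            rw [ha]; push_cast; linarith
          exact_mod_cast this
      refine (Finset.card_le_card hsub).trans (Finset.card_image_le.trans ?_)
      simp)
  have htot : (∏ z ∈ R \ T, ‖β i - z‖) * ‖∏ z ∈ T, (β i - z)‖ ≤ 2 := by
    rw [← norm_prod, ← norm_mul, Finset.prod_sdiff hTR, hRprod]
    calc _ ≤ ‖β i ^ n‖ + ‖(1 : ℂ)‖ := norm_sub_le _ _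
      _ = 2 := by rw [norm_pow, hbn]; norm_num
  rw [hTprod]
  set P := ‖∏ z ∈ T, (β i - z)‖
  have hfin : 2 / ((m : ℝ) * n) * ((2 / n) ^ (n - m) * ((n - m).factorial : ℝ)) * P ≤ 2 :=
    (mul_le_mul_of_nonneg_right hlow (norm_nonneg _)).trans htot
  have hf : (0 : ℝ) < ((n - m).factorial : ℝ) := by exact_mod_cast Nat.factorial_pos _
  rw [le_div_iff₀ (by positivity)]
  rw [div_pow] at hfin
  have e : P * (2 ^ (n - m) * ((n - m).factorial : ℝ)) =
      (2 / ((m : ℝ) * n) * (2 ^ (n - m) / n ^ (n - m) * ((n - m).factorial : ℝ)) * P) *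
        (m * n ^ (n - m + 1) / 2) := by
    rw [pow_succ]; field_simp
  rw [e]
  calc _ ≤ 2 * ((m : ℝ) * n ^ (n - m + 1) / 2) := by gcongr
    _ = _ := by ring
end

section
/- Let m ≤ n be positive integers and let W be the m × m Vandermonde matrix whose evaluation points are distinct n-th roots of unity. Then, with d = n − m, the spectral norm of the inverse satisfies ‖W⁻¹‖₂ ≤ n^{d + 3/2} / d!. -/
open scoped Matrix.Norms.L2Operator
open Finset Polynomial

lemma aux_norm_le {m : ℕ} (A : Matrix (Fin m) (Fin m) ℂ) (c : ℝ) (hc : 0 ≤ c)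
    (h : ∀ i j, ‖A i j‖ ≤ c) : ‖A‖ ≤ m * c := by
  rw [Matrix.cstar_norm_def]
  refine ContinuousLinearMap.opNorm_le_bound _ (by positivity) fun x => ?_
  have hx : ∀ i, ‖(Matrix.toEuclideanCLM (n := Fin m) (𝕜 := ℂ) A x) i‖ ^ 2 ≤ m * c ^ 2 * ‖x‖ ^ 2 := by
    intro i
    have h1 : (Matrix.toEuclideanCLM (n := Fin m) (𝕜 := ℂ) A x) i = ∑ j, A i j * x j := rfl
    rw [h1, EuclideanSpace.norm_sq_eq]
    calc ‖∑ j, A i j * x j‖ ^ 2 ≤ (∑ j, c * ‖x j‖) ^ 2 := by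
          gcongr
          refine (norm_sum_le _ _).trans (sum_le_sum fun j _ => ?_)
          rw [norm_mul]
          gcongr
          exact h i j
      _ = c ^ 2 * (∑ j, ‖x j‖) ^ 2 := by rw [← mul_sum, mul_pow]
      _ ≤ c ^ 2 * (m * ∑ j, ‖x j‖ ^ 2) := by
          gcongr
          simpa using sq_sum_le_card_mul_sum_sq (s := (univ : Finset (Fin m))) (f := fun j => ‖x j‖)
      _ = _ := by ring
  refine le_of_sq_le_sq ?_ (by positivity)
  rw [EuclideanSpace.norm_sq_eq]
  calc _ ≤ ∑ i : Fin m, m * c ^ 2 * ‖x‖ ^ 2 := sum_le_sum fun i _ => hx i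
    _ = _ := by simp; ring

lemma aux_fact {ι : Type*} [DecidableEq ι] (w : ι → ℝ) (hw : ∀ x, 0 ≤ w x) (t : ℕ) :
    ∀ T : Finset ι, T.card = t →
    (∀ y ∈ T, ((T.filter fun x => w x ≤ w y).card : ℝ) ≤ w y) → (t.factorial : ℝ) ≤ ∏ x ∈ T, w x := by
  induction t with
  | zero => intro T hT _; simp [Finset.card_eq_zero.1 hT]
  | succ t ih =>
    intro T hT h
    have hne : T.Nonempty := by rw [← Finset.card_pos]; omega
    obtain ⟨y, hy, hmax⟩ := T.exists_max_image w hne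
    have h1 : ((t + 1 : ℕ) : ℝ) ≤ w y := by
      have := h y hy
      rwa [Finset.filter_true_of_mem hmax, hT] at this
    have h2 := ih (T.erase y) (by rw [card_erase_of_mem hy, hT]; rfl) (by
      intro z hz
      refine le_trans ?_ (h z (mem_of_mem_erase hz))
      exact_mod_cast card_le_card (filter_subset_filter _ (erase_subset _ _)))
    rw [← Finset.mul_prod_erase _ _ hy, Nat.factorial_succ, Nat.cast_mul]
    exact mul_le_mul h1 h2 (by positivity) (hw y)

lemma aux_exists_int {n : ℕ} (hn : 0 < n) (z : ℂ) (hz : z ^ n = 1) :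
    ∃ k : ℤ, z = Complex.exp (Complex.I * ((2 * Real.pi * k / n : ℝ) : ℂ)) ∧ 4 * |(k : ℝ)| ≤ n * ‖z - 1‖ := by
  have hn' : (0 : ℝ) < n := by exact_mod_cast hn
  have : NeZero n := ⟨hn.ne'⟩
  have hnc : (n : ℂ) ≠ 0 := by exact_mod_cast hn.ne'
  have key : ∃ k : ℤ, z = Complex.exp (Complex.I * ((2 * Real.pi * k / n : ℝ) : ℂ)) ∧ 2 * |k| ≤ n := by
    obtain ⟨k, hk, rfl⟩ := (Complex.isPrimitiveRoot_exp n hn.ne').eq_pow_of_pow_eq_one hz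
    by_cases h : 2 * k ≤ n
    · refine ⟨k, ?_, ?_⟩
      · rw [← Complex.exp_nat_mul]
        congr 1
        push_cast
        ring
      · rw [abs_of_nonneg (by omega)]; omega
    · refine ⟨k - n, ?_, ?_⟩
      · rw [← Complex.exp_nat_mul, Complex.exp_eq_exp_iff_exists_int]
        refine ⟨1, ?_⟩
        push_cast
        field_simp
        ring
      · rw [abs_of_nonpos (by omega)]; omega
  obtain ⟨k, hk, hkn⟩ := key
  refine ⟨k, hk, ?_⟩
  have hkn' : 2 * |(k : ℝ)| ≤ n := by exact_mod_cast hkn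
  rw [hk, Complex.norm_exp_I_mul_ofReal_sub_one, Real.norm_eq_abs, abs_mul, abs_two]
  have hpi := Real.pi_pos
  have e : |2 * Real.pi * k / n / 2| = Real.pi * |(k : ℝ)| / n := by
    rw [show 2 * Real.pi * k / n / 2 = Real.pi * k / n by ring, abs_div, abs_mul,
      abs_of_pos hpi, abs_of_pos hn']
  have := Real.mul_abs_le_abs_sin (x := 2 * Real.pi * k / n / 2) (by
    rw [e, div_le_div_iff₀ hn' two_pos]; nlinarith)
  rw [e] at this
  have e2 : 2 / Real.pi * (Real.pi * |(k : ℝ)| / n) = 2 * |(k : ℝ)| / n := by field_simp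
  rw [e2, div_le_iff₀ hn'] at this
  linarith

lemma aux_count {n : ℕ} (hn : 0 < n) (T : Finset ℂ) (b : ℂ) (hb : b ^ n = 1) (hbT : b ∉ T)
    (hT : ∀ z ∈ T, z ^ n = 1) (r : ℝ) (hr : 0 ≤ r) (hTr : ∀ z ∈ T, n * ‖b - z‖ / 2 ≤ r) :
    (T.card : ℝ) ≤ r := by
  have hb0 : b ≠ 0 := by rintro rfl; simp [hn.ne'] at hb
  have hbn : ‖b‖ = 1 := Complex.norm_eq_one_of_pow_eq_one hb hn.ne'
  have : ∀ z : ℂ, ∃ k : ℤ, z ∈ T → z / b = Complex.exp (Complex.I * ((2 * Real.pi * k / n : ℝ) : ℂ)) ∧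
      4 * |(k : ℝ)| ≤ n * ‖z / b - 1‖ := by
    intro z
    by_cases hz : z ∈ T
    · obtain ⟨k, hk⟩ := aux_exists_int hn (z / b) (by rw [div_pow, hT z hz, hb, div_one])
      exact ⟨k, fun _ => hk⟩
    · exact ⟨0, fun h => absurd h hz⟩
  choose k hk using this
  have hr2 : 0 ≤ r / 2 := by positivity
  have hcard : T.card ≤ ((Icc (-(⌊r / 2⌋₊ : ℤ)) ⌊r / 2⌋₊).erase 0).card := by
    refine card_le_card_of_injOn k ?_ ?_
    · intro z hz
      have hz : z ∈ T := hz
      obtain ⟨h1, h2⟩ := hk z hz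
      have h3 : ‖z / b - 1‖ = ‖b - z‖ := by
        rw [show z / b - 1 = (z - b) / b by field_simp, norm_div, hbn, div_one, norm_sub_rev]
      have h4 : |k z| ≤ (⌊r / 2⌋₊ : ℤ) := by
        have : ((k z).natAbs : ℝ) ≤ r / 2 := by
          rw [Nat.cast_natAbs, Int.cast_abs]
          have := hTr z hz
          rw [h3] at h2
          linarith
        have := Nat.le_floor this
        rw [Int.abs_eq_natAbs]
        exact_mod_cast this
      simp only [coe_erase, Set.mem_sdiff, mem_coe, mem_Icc, Set.mem_singleton_iff]
      refine ⟨abs_le.1 h4, fun h0 => hbT ?_⟩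
      rw [h0] at h1
      simp only [Int.cast_zero, mul_zero, zero_div, Complex.ofReal_zero, Complex.exp_zero] at h1
      rw [div_eq_one_iff_eq hb0] at h1
      rwa [← h1]
    · intro z hz y hy h
      have h1 := (hk z hz).1
      rw [h, ← (hk y hy).1] at h1
      exact (div_left_inj' hb0).1 h1
  rw [card_erase_of_mem (by simp), Int.card_Icc] at hcard
  have h5 : T.card ≤ 2 * ⌊r / 2⌋₊ := by omega
  have h6 := Nat.floor_le hr2
  have h7 : (T.card : ℝ) ≤ 2 * ⌊r / 2⌋₊ := by exact_mod_cast h5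
  linarith

lemma aux_prod_lower {n : ℕ} (hn : 0 < n) (T : Finset ℂ) (b : ℂ) (hb : b ^ n = 1) (hbT : b ∉ T)
    (hT : ∀ z ∈ T, z ^ n = 1) :
    (T.card.factorial : ℝ) ≤ (n / 2 : ℝ) ^ T.card * ∏ z ∈ T, ‖b - z‖ := by
  have := aux_fact (fun z : ℂ => n * ‖b - z‖ / 2) (fun z => by positivity) T.card T rfl (by
    intro y hy
    refine aux_count hn _ b hb (by simp [hbT]) (fun z hz => hT z (mem_of_mem_filter z hz)) _
      (by positivity) (fun z hz => (mem_filter.1 hz).2))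
  refine this.trans (le_of_eq ?_)
  rw [← prod_const, ← prod_mul_distrib]
  exact prod_congr rfl fun z _ => by ring

lemma aux_prod_erase {n : ℕ} (hn : 0 < n) (b : ℂ) (hb : b ^ n = 1) :
    ∏ z ∈ (nthRootsFinset n (1 : ℂ)).erase b, ‖b - z‖ = n := by
  have h1 : Lagrange.nodal (nthRootsFinset n (1 : ℂ)) id = X ^ n - 1 := by
    rw [X_pow_sub_one_eq_prod hn (Complex.isPrimitiveRoot_exp n hn.ne')]; rfl
  have h2 := Lagrange.eval_nodal_derivative_eval_node_eq (v := id) ((mem_nthRootsFinset hn 1).2 hb)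
  rw [h1, Lagrange.eval_nodal] at h2
  simp only [id] at h2
  rw [← norm_prod, ← h2]
  simp [derivative_X_pow, Complex.norm_eq_one_of_pow_eq_one hb hn.ne']

lemma aux_eval {n : ℕ} (hn : 0 < n) (A : Finset ℂ) (hA : A ⊆ nthRootsFinset n (1 : ℂ)) (a : ℂ)
    (ha : a ∈ A) (b : ℂ) (hb : b ∈ nthRootsFinset n (1 : ℂ) \ A) :
    ‖(Lagrange.basis A id a).eval b‖ ≤ (n : ℝ) ^ (n - A.card - 1) / (n - A.card - 1).factorial := by
  set S := nthRootsFinset n (1 : ℂ) with hS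
  have hmem : ∀ z ∈ S, z ^ n = 1 := fun z hz => (mem_nthRootsFinset hn 1).1 hz
  obtain ⟨hbS, hbA⟩ := mem_sdiff.1 hb
  have haS := hA ha
  have hScard : S.card = n := (Complex.isPrimitiveRoot_exp n hn.ne').card_nthRootsFinset
  set T := (S \ A).erase b with hTdef
  have hTcard : T.card = n - A.card - 1 := by
    rw [hTdef, card_erase_of_mem hb, card_sdiff_of_subset hA, hScard]
  have hTS : ∀ z ∈ T, z ^ n = 1 := fun z hz => hmem z (mem_sdiff.1 (mem_of_mem_erase hz)).1
  have hab : a ≠ b := fun h => hbA (h ▸ ha)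
  have ea := aux_prod_erase hn a (hmem a haS)
  have eb := aux_prod_erase hn b (hmem b hbS)
  have s1 : (S.erase a) = (A.erase a) ∪ insert b T := by
    ext z
    simp only [hTdef, mem_erase, mem_union, mem_insert, mem_sdiff]
    by_cases h1 : z = a <;> by_cases h2 : z = b <;> by_cases h3 : z ∈ A <;> simp_all
    exact (mem_nthRootsFinset hn 1).1 (hA h3)
  have s2 : (S.erase b) = (A.erase a) ∪ insert a T := by
    ext z
    simp only [hTdef, mem_erase, mem_union, mem_insert, mem_sdiff]
    by_cases h1 : z = a <;> by_cases h2 : z = b <;> by_cases h3 : z ∈ A <;> simp_all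
    exact (mem_nthRootsFinset hn 1).1 (hA h3)
  have hbT : b ∉ T := by simp [hTdef]
  have haT : a ∉ T := by simp [hTdef, ha]
  have d1 : Disjoint (A.erase a) (insert b T) := by
    rw [Finset.disjoint_left]
    intro z hz
    simp only [hTdef, mem_erase, mem_insert, mem_sdiff] at hz ⊢
    rintro (rfl | h)
    · exact hbA hz.2
    · exact h.2.2 hz.2
  have d2 : Disjoint (A.erase a) (insert a T) := by
    rw [Finset.disjoint_left]
    intro z hz
    simp only [hTdef, mem_erase, mem_insert, mem_sdiff] at hz ⊢
    rintro (rfl | h)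
    · exact hz.1 rfl
    · exact h.2.2 hz.2
  rw [s1, prod_union d1, prod_insert hbT] at ea
  rw [s2, prod_union d2, prod_insert haT, norm_sub_rev b a] at eb
  have he : ‖(Lagrange.basis A id a).eval b‖ =
      (∏ z ∈ A.erase a, ‖b - z‖) / ∏ z ∈ A.erase a, ‖a - z‖ := by
    rw [Lagrange.basis, eval_prod, norm_prod, ← prod_div_distrib]
    refine prod_congr rfl fun z _ => ?_
    simp [Lagrange.basisDivisor, div_eq_inv_mul]
  have hlow := aux_prod_lower hn T b (hmem b hbS) hbT hTS
  have hup : ∏ z ∈ T, ‖a - z‖ ≤ 2 ^ T.card := by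
    rw [← prod_const]
    refine prod_le_prod (fun _ _ => norm_nonneg _) fun z hz => ?_
    refine (norm_sub_le _ _).trans ?_
    rw [Complex.norm_eq_one_of_pow_eq_one (hTS z hz) hn.ne',
      Complex.norm_eq_one_of_pow_eq_one (hmem a haS) hn.ne']
    norm_num
  have hn' : (0 : ℝ) < n := by exact_mod_cast hn
  have hr : 0 < ‖a - b‖ := norm_pos_iff.2 (sub_ne_zero.2 hab)
  rw [he, ← hTcard]
  set p := ∏ z ∈ A.erase a, ‖b - z‖
  set q := ∏ z ∈ A.erase a, ‖a - z‖
  set u := ∏ z ∈ T, ‖a - z‖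
  set v := ∏ z ∈ T, ‖b - z‖
  have hfac : (0 : ℝ) < T.card.factorial := by exact_mod_cast Nat.factorial_pos _
  have hq : 0 < q := by
    refine lt_of_le_of_ne (prod_nonneg fun _ _ => norm_nonneg _) fun h => ?_
    rw [← h, zero_mul] at ea
    exact hn'.ne ea
  have hv : 0 < v := by
    refine lt_of_le_of_ne (prod_nonneg fun _ _ => norm_nonneg _) fun h => ?_
    rw [← h, mul_zero, mul_zero] at eb
    exact hn'.ne eb
  have hpv : p * v = q * u := by
    have : ‖a - b‖ * (p * v) = ‖a - b‖ * (q * u) := by linarith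
    exact mul_left_cancel₀ hr.ne' this
  rw [div_le_div_iff₀ hq hfac]
  have hp : 0 ≤ p := prod_nonneg fun _ _ => norm_nonneg _
  calc p * T.card.factorial ≤ p * ((n / 2 : ℝ) ^ T.card * v) := by gcongr
    _ = (n / 2 : ℝ) ^ T.card * (q * u) := by rw [← hpv]; ring
    _ ≤ (n / 2 : ℝ) ^ T.card * (q * 2 ^ T.card) := by gcongr
    _ = _ := by rw [div_pow]; field_simp

lemma aux_coeff {n : ℕ} (hn : 0 < n) (P : ℂ[X]) (hP : P.natDegree < n) (j : ℕ) (hj : j < n) :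
    n * ‖P.coeff j‖ ≤ ∑ z ∈ nthRootsFinset n (1 : ℂ), ‖P.eval z‖ := by
  set S := nthRootsFinset n (1 : ℂ) with hS
  have hmem : ∀ z ∈ S, z ^ n = 1 := fun z hz => (mem_nthRootsFinset hn 1).1 hz
  have : NeZero n := ⟨hn.ne'⟩
  have hω := Complex.isPrimitiveRoot_exp n hn.ne'
  set ω := Complex.exp (2 * Real.pi * Complex.I / n)
  have hsum : ∀ f : ℂ → ℂ, ∑ z ∈ S, f z = ∑ k ∈ range n, f (ω ^ k) := by
    intro f
    symm
    refine sum_bij (fun k _ => ω ^ k) ?_ ?_ ?_ ?_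
    · intro k _
      rw [hS, mem_nthRootsFinset hn, ← pow_mul, mul_comm, pow_mul, hω.pow_eq_one, one_pow]
    · intro k hk l hl h
      exact hω.pow_inj (mem_range.1 hk) (mem_range.1 hl) h
    · intro z hz
      obtain ⟨k, hk, h⟩ := hω.eq_pow_of_pow_eq_one (hmem z hz)
      exact ⟨k, mem_range.2 hk, h⟩
    · intros; rfl
  have orth : ∀ l ∈ range n, ∑ z ∈ S, z ^ (l + (n - j)) = if l = j then (n : ℂ) else 0 := by
    intro l hl
    have hl := mem_range.1 hl
    rw [hsum]
    have e : ∀ k, (ω ^ k) ^ (l + (n - j)) = (ω ^ (l + (n - j))) ^ k := fun k => by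
      rw [← pow_mul, ← pow_mul, mul_comm]
    simp_rw [e]
    split_ifs with h
    · rw [h, show j + (n - j) = n by omega, hω.pow_eq_one]; simp
    · have hne : ω ^ (l + (n - j)) ≠ 1 := by
        intro h1
        obtain ⟨c, hc⟩ := (hω.pow_eq_one_iff_dvd _).1 h1
        have : c < 2 := by
          by_contra hc2
          have : n * 2 ≤ n * c := Nat.mul_le_mul_left _ (by omega)
          omega
        interval_cases c <;> omega
      rw [geom_sum_eq hne, ← pow_mul, mul_comm, pow_mul, hω.pow_eq_one]
      simp
  have main : ∑ z ∈ S, P.eval z * z ^ (n - j) = n * P.coeff j := by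
    have : ∀ z ∈ S, P.eval z * z ^ (n - j) = ∑ l ∈ range n, P.coeff l * z ^ (l + (n - j)) := by
      intro z _
      rw [eval_eq_sum_range' hP, sum_mul]
      exact sum_congr rfl fun l _ => by rw [pow_add]; ring
    rw [sum_congr rfl this, sum_comm]
    simp_rw [← mul_sum]
    rw [sum_congr rfl fun l hl => by rw [orth l hl]]
    simp [hj]
    ring
  have : ‖(n : ℂ) * P.coeff j‖ = n * ‖P.coeff j‖ := by simp
  rw [← this, ← main]
  refine (norm_sum_le _ _).trans (sum_le_sum fun z hz => ?_)
  rw [norm_mul, norm_pow, Complex.norm_eq_one_of_pow_eq_one (hmem z hz) hn.ne', one_pow, mul_one]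

lemma aux_coeff_basis {n : ℕ} (hn : 0 < n) (A : Finset ℂ) (hA : A ⊆ nthRootsFinset n (1 : ℂ)) (a : ℂ)
    (ha : a ∈ A) (j : ℕ) (hj : j < n) :
    n * ‖(Lagrange.basis A id a).coeff j‖ ≤
      1 + (n - A.card : ℕ) * ((n : ℝ) ^ (n - A.card - 1) / (n - A.card - 1).factorial) := by
  have hScard : (nthRootsFinset n (1 : ℂ)).card = n :=
    (Complex.isPrimitiveRoot_exp n hn.ne').card_nthRootsFinset
  have hAn : A.card ≤ n := hScard ▸ card_le_card hA
  have hApos : 0 < A.card := card_pos.2 ⟨a, ha⟩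
  refine (aux_coeff hn _ (by
    rw [Lagrange.natDegree_basis (Set.injOn_id _) ha]; omega) j hj).trans ?_
  rw [← sum_sdiff hA, add_comm]
  refine add_le_add ?_ ?_
  · rw [← add_sum_erase _ _ ha]
    have h1 : eval a (Lagrange.basis A id a) = 1 := Lagrange.eval_basis_self (Set.injOn_id _) ha
    rw [h1, sum_eq_zero]
    · simp
    · intro z hz
      have : eval z (Lagrange.basis A id a) = 0 :=
        Lagrange.eval_basis_of_ne (v := id) (ne_of_mem_erase hz).symm (mem_of_mem_erase hz)
      rw [this, norm_zero]
  · refine (sum_le_card_nsmul _ _ _ fun z hz => aux_eval hn A hA a ha z hz).trans ?_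
    rw [card_sdiff_of_subset hA, hScard, nsmul_eq_mul]

lemma aux_num (n d : ℕ) (hd : d < n) :
    1 + d * ((n : ℝ) ^ (d - 1) / (d - 1).factorial) ≤ (n : ℝ) ^ (d + 1) / d.factorial := by
  have hn : (1 : ℝ) ≤ n := by exact_mod_cast (by omega : 1 ≤ n)
  rcases d with _ | d
  · simpa using hn
  · have hf : (0 : ℝ) < (d + 1).factorial := by exact_mod_cast Nat.factorial_pos _
    have hf' : (0 : ℝ) < d.factorial := by exact_mod_cast Nat.factorial_pos _
    have h1 : ((d + 1).factorial : ℝ) ≤ n ^ (d + 1) := by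
      have : (d + 1).factorial ≤ n ^ (d + 1) :=
        (Nat.factorial_le_pow _).trans (Nat.pow_le_pow_left hd.le _)
      exact_mod_cast this
    rw [le_div_iff₀ hf]
    have e : (1 + ((d + 1 : ℕ) : ℝ) * ((n : ℝ) ^ (d + 1 - 1) / (d + 1 - 1).factorial)) * (d + 1).factorial
        = (d + 1).factorial + (d + 1) ^ 2 * (n : ℝ) ^ d := by
      rw [Nat.add_sub_cancel, Nat.factorial_succ]
      push_cast
      field_simp
    rw [e]
    have h2 : ((d : ℝ) + 1) ≤ n - 1 := by
      have : ((d + 1 + 1 : ℕ) : ℝ) ≤ n := by exact_mod_cast hd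
      push_cast at this; linarith
    have h3 : ((d : ℝ) + 1) ^ 2 ≤ (n - 1) ^ 2 := by gcongr
    have h4 : (0 : ℝ) ≤ n ^ d := by positivity
    calc _ ≤ (n : ℝ) ^ (d + 1) + (n - 1) ^ 2 * (n : ℝ) ^ d := by gcongr
      _ = (n : ℝ) ^ d * (n ^ 2 - n + 1) := by ring
      _ ≤ (n : ℝ) ^ d * n ^ 2 := by gcongr; linarith
      _ = _ := by ring

/-- Let `m ≤ n` be positive integers and let `W` be the `m × m` Vandermonde matrix whose
evaluation points are distinct `n`-th roots of unity. Then, with `d = n − m`,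
`‖W⁻¹‖₂ ≤ n^{d + 3/2} / d!`. -/
theorem vandermonde_inverse_opNorm_le (m n : ℕ) (hm : 0 < m) (hmn : m ≤ n)
    (α : Fin m → ℂ) (hroot : ∀ i, α i ^ n = 1) (hinj : Function.Injective α) :
    ‖(Matrix.vandermonde α)⁻¹‖ ≤
      (n : ℝ) ^ ((n - m : ℕ) + 3 / 2 : ℝ) / (Nat.factorial (n - m)) := by
  have hn : 0 < n := by omega
  have hn1 : (1 : ℝ) ≤ n := by exact_mod_cast hn
  set A : Finset ℂ := univ.image α with hAdef
  have hAcard : A.card = m := by simp [hAdef, card_image_of_injective _ hinj]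
  have hαA : ∀ i, α i ∈ A := fun i => by simp [hAdef]
  have hA : A ⊆ nthRootsFinset n (1 : ℂ) := by
    intro z hz
    obtain ⟨i, -, rfl⟩ := mem_image.1 hz
    exact (mem_nthRootsFinset hn 1).2 (hroot i)
  have hinv : (Matrix.vandermonde α)⁻¹ =
      Matrix.of fun j i : Fin m => (Lagrange.basis A id (α i)).coeff j := by
    refine Matrix.inv_eq_right_inv ?_
    ext i k
    rw [Matrix.mul_apply]
    have h1 : eval (α i) (Lagrange.basis A id (α k)) = (1 : Matrix (Fin m) (Fin m) ℂ) i k := by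
      rw [Matrix.one_apply]
      split_ifs with h
      · rw [h]; exact Lagrange.eval_basis_self (v := id) (Set.injOn_id _) (hαA k)
      · exact Lagrange.eval_basis_of_ne (v := id) (fun h' => h (hinj h').symm) (hαA i)
    rw [← h1, eval_eq_sum_range' (n := m)
      (by rw [Lagrange.natDegree_basis (Set.injOn_id _) (hαA k)]; omega), ← Fin.sum_univ_eq_sum_range
      (fun j => (Lagrange.basis A id (α k)).coeff j * α i ^ j)]
    exact sum_congr rfl fun j _ => by simp [Matrix.vandermonde_apply, mul_comm]
  rw [hinv]
  set c : ℝ := (n : ℝ) ^ (n - m + 1) / (n - m).factorial with hc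
  have hc0 : 0 ≤ c := by positivity
  have hb := aux_norm_le (Matrix.of fun j i : Fin m => (Lagrange.basis A id (α i)).coeff j) (c / n)
    (by positivity) (by
      intro j i
      rw [Matrix.of_apply, le_div_iff₀ (by linarith), mul_comm]
      have := aux_coeff_basis hn A hA (α i) (hαA i) j (by omega)
      rw [hAcard] at this
      exact this.trans (aux_num n (n - m) (by omega)))
  refine hb.trans ?_
  have h1 : (m : ℝ) * (c / n) ≤ c := by
    have hmn' : (m : ℝ) ≤ n := by exact_mod_cast hmn
    rw [mul_div_assoc', div_le_iff₀ (by linarith)]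
    nlinarith
  refine h1.trans ?_
  rw [hc]
  gcongr
  rw [← Real.rpow_natCast]
  refine Real.rpow_le_rpow_of_exponent_le hn1 ?_
  push_cast
  linarith
end

section
/- Let m ≤ n be positive integers and let W be the m × m Vandermonde matrix whose evaluation points are distinct n-th roots of unity. Then, with d = n − m, the spectral condition number satisfies κ₂(W) = ‖W‖₂ · ‖W⁻¹‖₂ ≤ n^{d + 2} / d!. -/
open scoped Matrix.Norms.L2Operator

namespace VandCond

open Finset Polynomial

lemma norm_le_of_entries {m : ℕ} (M : Matrix (Fin m) (Fin m) ℂ) (c : ℝ) (hc : 0 ≤ c)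
    (h : ∀ i j, ‖M i j‖ ≤ c) : ‖M‖ ≤ m * c := by
  rw [← Matrix.l2_opNorm_toEuclideanCLM]
  refine ContinuousLinearMap.opNorm_le_bound _ (by positivity) fun x ↦ ?_
  refine (sq_le_sq₀ (by positivity) (by positivity)).mp ?_
  have hrow : ∀ i, ‖(M.mulVec x.ofLp) i‖ ^ 2 ≤ c ^ 2 * (m * ∑ j, ‖x j‖ ^ 2) := by
    intro i
    have h1 : ‖(M.mulVec x.ofLp) i‖ ≤ c * ∑ j, ‖x j‖ := by
      rw [Matrix.mulVec, dotProduct, Finset.mul_sum]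
      refine (norm_sum_le _ _).trans (Finset.sum_le_sum fun j _ ↦ ?_)
      rw [norm_mul]
      exact mul_le_mul_of_nonneg_right (h i j) (norm_nonneg _)
    have h2 : (∑ j, ‖x j‖) ^ 2 ≤ m * ∑ j, ‖x j‖ ^ 2 := by
      simpa using sq_sum_le_card_mul_sum_sq (s := (Finset.univ : Finset (Fin m)))
        (f := fun j ↦ ‖x j‖)
    calc _ ≤ (c * ∑ j, ‖x j‖) ^ 2 := by gcongr
      _ = c ^ 2 * (∑ j, ‖x j‖) ^ 2 := by ring
      _ ≤ _ := by gcongr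
  rw [EuclideanSpace.norm_sq_eq, mul_pow, EuclideanSpace.norm_sq_eq x]
  simp only [Matrix.ofLp_toEuclideanCLM]
  calc _ ≤ ∑ i : Fin m, c ^ 2 * (m * ∑ j, ‖x j‖ ^ 2) := Finset.sum_le_sum fun i _ ↦ hrow i
    _ = _ := by simp; ring

lemma factorial_le_prod (S : Finset ℕ) (h : ∀ k ∈ S, 0 < k) : S.card.factorial ≤ ∏ k ∈ S, k := by
  induction S using Finset.induction_on_max with
  | empty => simp
  | insert a s ha ih =>
    have hna : a ∉ s := fun h ↦ lt_irrefl _ (ha a h)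
    rw [Finset.card_insert_of_notMem hna, Finset.prod_insert hna, Nat.factorial_succ]
    have hs : s ⊆ Finset.Ico 1 a := fun k hk ↦
      Finset.mem_Ico.2 ⟨h k (Finset.mem_insert_of_mem hk), ha k hk⟩
    have := Finset.card_le_card hs
    have ha0 := h a (Finset.mem_insert_self _ _)
    simp at this
    exact Nat.mul_le_mul (by omega) (ih fun k hk ↦ h k (Finset.mem_insert_of_mem hk))

lemma factorial_le_prod_natAbs {ι : Type*} (T : Finset ι) (k : ι → ℤ)
    (hinj : Set.InjOn k T) (h0 : ∀ t ∈ T, k t ≠ 0) :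
    T.card.factorial ≤ 2 ^ T.card * ∏ t ∈ T, (k t).natAbs := by
  classical
  have key : ∀ S ⊆ T, Set.InjOn (fun t ↦ (k t).natAbs) S →
      S.card.factorial ≤ ∏ t ∈ S, (k t).natAbs := by
    intro S hS hi
    have := factorial_le_prod (S.image fun t ↦ (k t).natAbs) (by
      intro a ha
      obtain ⟨t, ht, rfl⟩ := Finset.mem_image.1 ha
      exact Int.natAbs_pos.2 (h0 t (hS ht)))
    rwa [Finset.card_image_of_injOn hi, Finset.prod_image hi] at this
  have hp := key (T.filter fun t ↦ 0 < k t) (Finset.filter_subset _ _) (by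
    intro a ha b hb hab
    simp at ha hb hab
    exact hinj ha.1 hb.1 (by omega))
  have hq := key (T.filter fun t ↦ ¬ 0 < k t) (Finset.filter_subset _ _) (by
    intro a ha b hb hab
    simp at ha hb hab
    exact hinj ha.1 hb.1 (by omega))
  have hc := Finset.card_filter_add_card_filter_not (s := T) (fun t ↦ 0 < k t)
  rw [← Finset.prod_filter_mul_prod_filter_not T (fun t ↦ 0 < k t), ← hc]
  set p := (T.filter fun t ↦ 0 < k t).card
  set q := (T.filter fun t ↦ ¬ 0 < k t).card
  rw [← Nat.add_choose_mul_factorial_mul_factorial, mul_assoc]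
  exact Nat.mul_le_mul (Nat.choose_le_two_pow _ _) (Nat.mul_le_mul hp hq)

lemma exists_int (n : ℕ) (hn : 0 < n) (z : ℂ) (hz : z ^ n = 1) :
    ∃ k : ℤ, z = Complex.exp (Complex.I * ((2 * Real.pi * k / n : ℝ) : ℂ)) ∧
      4 * |(k : ℝ)| / n ≤ ‖z - 1‖ := by
  have hnorm : ‖z‖ = 1 := Complex.norm_eq_one_of_pow_eq_one hz hn.ne'
  have hzexp : z = Complex.exp (Complex.I * (z.arg : ℂ)) := by
    have := Complex.norm_mul_exp_arg_mul_I z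
    rw [hnorm] at this
    rw [mul_comm]
    simpa using this.symm
  have hn' : (n : ℝ) ≠ 0 := by positivity
  have h1 : Complex.exp (n * (Complex.I * (z.arg : ℂ))) = 1 := by
    rw [Complex.exp_nat_mul, ← hzexp, hz]
  obtain ⟨k, hk⟩ := Complex.exp_eq_one_iff.1 h1
  have hk' : z.arg * n = 2 * Real.pi * k := by
    have := congrArg Complex.im hk
    simp at this
    linarith
  have harg : z.arg = 2 * Real.pi * k / n := by
    rw [eq_div_iff hn', hk']
  refine ⟨k, by rw [← harg]; exact hzexp, ?_⟩
  have hn2 : ‖z - 1‖ = ‖2 * Real.sin (z.arg / 2)‖ := by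
    conv_lhs => rw [hzexp]
    exact Complex.norm_exp_I_mul_ofReal_sub_one _
  rw [hn2, norm_mul, Real.norm_eq_abs, Real.norm_eq_abs]
  have h3 : |z.arg / 2| ≤ Real.pi / 2 := by
    rw [abs_div]
    have := Complex.abs_arg_le_pi z
    simp
    linarith
  have h4 := Real.mul_abs_le_abs_sin h3
  have h5 : 2 / Real.pi * |z.arg / 2| = 2 * |(k : ℝ)| / n := by
    rw [harg]
    simp only [abs_div, abs_mul, abs_of_pos Real.pi_pos, Nat.abs_cast, abs_two]
    field_simp
  rw [h5] at h4
  rw [abs_two]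
  calc _ = 2 * (2 * |(k : ℝ)| / n) := by ring
    _ ≤ _ := by gcongr

/-- Lower bound for the product of distances from a root to a set of other roots. -/
lemma prod_dist_lower (n : ℕ) (hn : 0 < n) (x : ℂ) (hx : x ^ n = 1) (T : Finset ℂ)
    (hT : ∀ t ∈ T, t ^ n = 1) (hxT : x ∉ T) :
    (2 / n : ℝ) ^ T.card * T.card.factorial ≤ ∏ t ∈ T, ‖x - t‖ := by
  have hx0 : x ≠ 0 := by rintro rfl; simp [hn.ne'] at hx
  have hxn : ‖x‖ = 1 := Complex.norm_eq_one_of_pow_eq_one hx hn.ne'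
  have hex : ∀ t : ℂ, ∃ k : ℤ, t ∈ T →
      (t / x = Complex.exp (Complex.I * ((2 * Real.pi * k / n : ℝ) : ℂ)) ∧
      4 * |(k : ℝ)| / n ≤ ‖t / x - 1‖) := by
    intro t
    by_cases ht : t ∈ T
    · obtain ⟨k, hk⟩ := exists_int n hn (t / x) (by rw [div_pow, hT t ht, hx, div_one])
      exact ⟨k, fun _ ↦ hk⟩
    · exact ⟨0, fun h ↦ absurd h ht⟩
  choose k hk using hex
  have hfac := factorial_le_prod_natAbs T k (by
      intro a ha b hb hab
      have h1 := (hk a ha).1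
      rw [hab, ← (hk b hb).1] at h1
      exact (div_left_inj' hx0).1 h1) (by
      intro t ht h0
      have h1 := (hk t ht).1
      rw [h0] at h1
      simp at h1
      rw [div_eq_one_iff_eq hx0] at h1
      exact hxT (h1 ▸ ht))
  have hfacR : (T.card.factorial : ℝ) ≤ 2 ^ T.card * ∏ t ∈ T, |(k t : ℝ)| := by
    have : ∀ t, |(k t : ℝ)| = ((k t).natAbs : ℝ) := fun t ↦ by simp
    simp only [this]
    exact_mod_cast hfac
  calc _ ≤ (2 / n : ℝ) ^ T.card * (2 ^ T.card * ∏ t ∈ T, |(k t : ℝ)|) := by gcongr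
    _ = ∏ t ∈ T, (4 * |(k t : ℝ)| / n) := by
      rw [← mul_assoc, ← mul_pow, ← Finset.prod_const, ← Finset.prod_mul_distrib]
      refine Finset.prod_congr rfl fun t _ ↦ by ring
    _ ≤ _ := by
      refine Finset.prod_le_prod (fun t _ ↦ by positivity) fun t ht ↦ (hk t ht).2.trans_eq ?_
      rw [div_sub_one hx0, norm_div, hxn, div_one, norm_sub_rev]

lemma prod_dist_upper (n : ℕ) (hn : 0 < n) (x : ℂ) (hx : x ^ n = 1) (T : Finset ℂ)
    (hT : ∀ t ∈ T, t ^ n = 1) : ∏ t ∈ T, ‖x - t‖ ≤ 2 ^ T.card := by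
  rw [← Finset.prod_const]
  refine Finset.prod_le_prod (fun t _ ↦ norm_nonneg _) fun t ht ↦ ?_
  refine (norm_sub_le _ _).trans ?_
  rw [Complex.norm_eq_one_of_pow_eq_one hx hn.ne',
    Complex.norm_eq_one_of_pow_eq_one (hT t ht) hn.ne']
  norm_num

lemma prod_erase_const (n : ℕ) (hn : 0 < n) (x y : ℂ) (hx : x ^ n = 1) (hy : y ^ n = 1) :
    ∏ t ∈ (nthRootsFinset n (1 : ℂ)).erase x, ‖x - t‖ =
      ∏ t ∈ (nthRootsFinset n (1 : ℂ)).erase y, ‖y - t‖ := by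
  have hx0 : x ≠ 0 := by rintro rfl; simp [hn.ne'] at hx
  have hy0 : y ≠ 0 := by rintro rfl; simp [hn.ne'] at hy
  refine Finset.prod_equiv (Equiv.mulLeft₀ (y / x) (div_ne_zero hy0 hx0)) ?_ ?_
  · intro t
    simp only [Finset.mem_erase, mem_nthRootsFinset hn, Equiv.mulLeft₀_apply, mul_pow, div_pow, hx,
      hy, div_one, one_mul]
    refine and_congr_left fun _ ↦ not_congr ?_
    constructor
    · rintro rfl; field_simp
    · intro h; field_simp at h; exact h
  · intro t _
    have : y - (Equiv.mulLeft₀ (y / x) (div_ne_zero hy0 hx0)) t = (y / x) * (x - t) := by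
      simp only [Equiv.mulLeft₀_apply]; field_simp
    rw [this, norm_mul, norm_div, Complex.norm_eq_one_of_pow_eq_one hx hn.ne',
      Complex.norm_eq_one_of_pow_eq_one hy hn.ne']
    simp

lemma sum_pow_roots (n : ℕ) (hn : 0 < n) (k : ℕ) (hk : ¬ n ∣ k) :
    ∑ z ∈ nthRootsFinset n (1 : ℂ), z ^ k = 0 := by
  have hprim := Complex.isPrimitiveRoot_exp n hn.ne'
  set w := Complex.exp (2 * Real.pi * Complex.I / n) with hw
  have hw0 : w ≠ 0 := Complex.exp_ne_zero _
  have h1 : w ^ k ≠ 1 := fun h ↦ hk ((hprim.pow_eq_one_iff_dvd k).1 h)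
  have h2 : ∑ z ∈ nthRootsFinset n (1 : ℂ), w ^ k * z ^ k =
      ∑ z ∈ nthRootsFinset n (1 : ℂ), z ^ k := by
    refine Finset.sum_equiv (Equiv.mulLeft₀ w hw0) ?_ ?_
    · intro t
      simp [mem_nthRootsFinset hn, mul_pow, hprim.pow_eq_one]
    · intro t _
      simp [mul_pow]
  rw [← Finset.mul_sum] at h2
  have h3 : (w ^ k - 1) * ∑ z ∈ nthRootsFinset n (1 : ℂ), z ^ k = 0 := by
    rw [sub_mul, h2]; ring
  exact (mul_eq_zero.1 h3).resolve_left (sub_ne_zero.2 h1)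

lemma card_roots (n : ℕ) (hn : 0 < n) : (nthRootsFinset n (1 : ℂ)).card = n :=
  (Complex.isPrimitiveRoot_exp n hn.ne').card_nthRootsFinset

lemma coeff_bound (n : ℕ) (hn : 0 < n) (p : ℂ[X]) (hp : p.natDegree < n) (i : ℕ) (hi : i < n) :
    n * ‖p.coeff i‖ ≤ ∑ z ∈ nthRootsFinset n (1 : ℂ), ‖p.eval z‖ := by
  have h : (n : ℂ) * p.coeff i = ∑ z ∈ nthRootsFinset n (1 : ℂ), p.eval z * z ^ (n - i) := by
    simp_rw [eval_eq_sum_range' hp, Finset.sum_mul]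
    rw [Finset.sum_comm, Finset.sum_eq_single i]
    · have : ∀ z ∈ nthRootsFinset n (1 : ℂ), p.coeff i * z ^ i * z ^ (n - i) = p.coeff i := by
        intro z hz
        rw [mul_assoc, ← pow_add, Nat.add_sub_cancel' hi.le, (mem_nthRootsFinset hn 1).1 hz,
          mul_one]
      rw [Finset.sum_congr rfl this, Finset.sum_const, card_roots n hn, nsmul_eq_mul]
    · intro j hj hji
      have hj' := Finset.mem_range.1 hj
      simp_rw [mul_assoc, ← pow_add]
      rw [← Finset.mul_sum, sum_pow_roots n hn, mul_zero]
      rintro ⟨c, hc⟩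
      have hc1 : c < 2 := by
        by_contra hcc
        have : n * 2 ≤ n * c := Nat.mul_le_mul_left _ (by omega)
        omega
      interval_cases c <;> omega
    · intro h; exact absurd (Finset.mem_range.2 hi) h
  have h2 := congrArg norm h
  rw [norm_mul, Complex.norm_natCast] at h2
  rw [h2]
  refine (norm_sum_le _ _).trans (Finset.sum_le_sum fun z hz ↦ ?_)
  rw [norm_mul, norm_pow,
    Complex.norm_eq_one_of_pow_eq_one ((mem_nthRootsFinset hn 1).1 hz) hn.ne']
  simp

lemma basis_eval_bound (m n : ℕ) (hn : 0 < n) 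
    (α : Fin m → ℂ) (hroot : ∀ i, α i ^ n = 1) (hinj : Function.Injective α) (j : Fin m)
    (b : ℂ) (hb : b ^ n = 1) (hbα : ∀ i, b ≠ α i) :
    ‖(Lagrange.basis univ α j).eval b‖ ≤ (n : ℝ) ^ (n - m - 1) / (n - m - 1).factorial := by
  classical
  set R := nthRootsFinset n (1 : ℂ) with hR
  set A := univ.image α with hA
  have hAR : A ⊆ R := by
    intro z hz
    obtain ⟨i, _, rfl⟩ := Finset.mem_image.1 hz
    exact (mem_nthRootsFinset hn 1).2 (hroot i)
  set A' := (univ.erase j).image α with hA'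
  set B' := (R \ A).erase b with hB'
  have hbA : b ∉ A := by
    intro h
    obtain ⟨i, _, rfl⟩ := Finset.mem_image.1 h
    exact hbα i rfl
  have hbR : b ∈ R := (mem_nthRootsFinset hn 1).2 hb
  have haA : α j ∈ A := Finset.mem_image_of_mem _ (mem_univ _)
  have hA'e : A' = A.erase (α j) := by
    rw [hA', Finset.image_erase hinj]
  have hdisj : Disjoint A' B' := by
    rw [Finset.disjoint_left]
    intro z hz hz'
    rw [hA'e] at hz
    exact (Finset.mem_sdiff.1 (Finset.mem_of_mem_erase hz')).2 (Finset.mem_of_mem_erase hz)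
  have hbN : b ∉ A' ∪ B' := by
    simp only [Finset.mem_union, hA'e, hB', Finset.mem_erase]
    tauto
  have haN : α j ∉ A' ∪ B' := by
    simp only [Finset.mem_union, hA'e, hB', Finset.mem_erase, Finset.mem_sdiff]
    tauto
  have e1 : R.erase (α j) = insert b (A' ∪ B') := by
    ext z
    simp only [Finset.mem_insert, Finset.mem_union, hA'e, hB', Finset.mem_erase, Finset.mem_sdiff]
    have := @hAR z
    by_cases hzb : z = b
    · subst hzb; have := hbα j; tauto
    · by_cases hzj : z = α j
      · subst hzj; tauto
      · tauto
  have e2 : R.erase b = insert (α j) (A' ∪ B') := by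
    ext z
    simp only [Finset.mem_insert, Finset.mem_union, hA'e, hB', Finset.mem_erase, Finset.mem_sdiff]
    have := @hAR z
    by_cases hzb : z = b
    · subst hzb; have := hbα j; tauto
    · by_cases hzj : z = α j
      · subst hzj; tauto
      · tauto
  have hconst := prod_erase_const n hn b (α j) hb (hroot j)
  rw [← hR, e1, e2, Finset.prod_insert hbN, Finset.prod_insert haN, Finset.prod_union hdisj,
    Finset.prod_union hdisj, norm_sub_rev (α j) b] at hconst
  have hne : ‖b - α j‖ ≠ 0 := norm_ne_zero_iff.2 (sub_ne_zero.2 (hbα j))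
  have hconst' := mul_left_cancel₀ hne hconst
  have hB'root : ∀ t ∈ B', t ^ n = 1 := fun t ht ↦
    (mem_nthRootsFinset hn 1).1 (Finset.mem_sdiff.1 (Finset.mem_of_mem_erase ht)).1
  have hcard : B'.card = n - m - 1 := by
    rw [hB', Finset.card_erase_of_mem (Finset.mem_sdiff.2 ⟨hbR, hbA⟩),
      Finset.card_sdiff_of_subset hAR, hR, card_roots n hn, hA,
      Finset.card_image_of_injective _ hinj]
    simp
  have hlow := prod_dist_lower n hn b hb B' hB'root (Finset.notMem_erase _ _)
  have hup := prod_dist_upper n hn (α j) (hroot j) B' hB'root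
  rw [hcard] at hlow hup
  have hbasis : ‖(Lagrange.basis univ α j).eval b‖ =
      (∏ t ∈ A', ‖b - t‖) / ∏ t ∈ A', ‖α j - t‖ := by
    rw [hA', Finset.prod_image hinj.injOn, Finset.prod_image hinj.injOn, ← Finset.prod_div_distrib,
      Lagrange.basis, eval_prod, norm_prod]
    refine Finset.prod_congr rfl fun i _ ↦ ?_
    simp [Lagrange.basisDivisor, div_eq_inv_mul]
  have hposA : 0 < ∏ t ∈ A', ‖α j - t‖ := by
    refine Finset.prod_pos fun t ht ↦ norm_pos_iff.2 (sub_ne_zero.2 ?_)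
    rintro rfl
    exact haN (Finset.mem_union_left _ ht)
  have hnR : (0 : ℝ) < n := by exact_mod_cast hn
  set e := n - m - 1
  have hlowpos : (0 : ℝ) < (2 / n : ℝ) ^ e * e.factorial := by positivity
  have hposB : 0 < ∏ t ∈ B', ‖b - t‖ := hlowpos.trans_le hlow
  have : (∏ t ∈ A', ‖b - t‖) / ∏ t ∈ A', ‖α j - t‖ =
      (∏ t ∈ B', ‖α j - t‖) / ∏ t ∈ B', ‖b - t‖ := by
    rw [div_eq_div_iff hposA.ne' hposB.ne', hconst', mul_comm]
  rw [hbasis, this]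
  calc _ ≤ 2 ^ e / ((2 / n : ℝ) ^ e * e.factorial) := by gcongr
    _ = _ := by rw [div_pow]; field_simp

lemma basis_coeff_bound (m n : ℕ) (hm : 0 < m) (hmn : m ≤ n)
    (α : Fin m → ℂ) (hroot : ∀ i, α i ^ n = 1) (hinj : Function.Injective α) (i j : Fin m) :
    ‖(Lagrange.basis univ α j).coeff i‖ ≤
      (1 + (n - m : ℕ) * ((n : ℝ) ^ (n - m - 1) / (n - m - 1).factorial)) / n := by
  classical
  have hn : 0 < n := by omega
  have hnR : (0 : ℝ) < n := by exact_mod_cast hn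
  rw [le_div_iff₀ hnR, mul_comm]
  have hdeg : (Lagrange.basis univ α j).natDegree < n := by
    rw [Lagrange.natDegree_basis hinj.injOn (mem_univ _)]
    simp; omega
  refine (coeff_bound n hn _ hdeg i (by omega)).trans ?_
  have hAR : univ.image α ⊆ nthRootsFinset n (1 : ℂ) := by
    intro z hz
    obtain ⟨i, _, rfl⟩ := Finset.mem_image.1 hz
    exact (mem_nthRootsFinset hn 1).2 (hroot i)
  rw [← Finset.sum_sdiff hAR, add_comm]
  refine add_le_add ?_ ?_
  · rw [Finset.sum_image hinj.injOn, Finset.sum_eq_single j]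
    · rw [Lagrange.eval_basis_self hinj.injOn (mem_univ _)]; simp
    · intro k _ hk
      rw [Lagrange.eval_basis_of_ne hk.symm (mem_univ _)]; simp
    · simp
  · have hcard : (nthRootsFinset n (1 : ℂ) \ univ.image α).card = n - m := by
      rw [Finset.card_sdiff_of_subset hAR, card_roots n hn, Finset.card_image_of_injective _ hinj]
      simp
    rw [← hcard, ← nsmul_eq_mul, hcard]
    conv_rhs => rw [← hcard]
    refine Finset.sum_le_card_nsmul _ _ _ fun b hb ↦ ?_
    rw [hcard]
    rw [Finset.mem_sdiff] at hb
    refine basis_eval_bound m n hn α hroot hinj j b ((mem_nthRootsFinset hn 1).1 hb.1) ?_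
    rintro k rfl
    exact hb.2 (Finset.mem_image_of_mem _ (mem_univ _))

lemma inv_vandermonde (m : ℕ) (hm : 0 < m) (α : Fin m → ℂ) (hinj : Function.Injective α) :
    (Matrix.vandermonde α)⁻¹ =
      Matrix.of fun i j : Fin m ↦ (Lagrange.basis univ α j).coeff i := by
  refine Matrix.inv_eq_right_inv ?_
  ext i j
  have hdeg : (Lagrange.basis univ α j).natDegree < m := by
    rw [Lagrange.natDegree_basis hinj.injOn (mem_univ _)]
    simp; omega
  have h : (Matrix.vandermonde α * Matrix.of fun i j : Fin m ↦
      (Lagrange.basis univ α j).coeff i) i j = (Lagrange.basis univ α j).eval (α i) := by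
    rw [eval_eq_sum_range' hdeg, Finset.sum_range, Matrix.mul_apply]
    refine Finset.sum_congr rfl fun k _ ↦ ?_
    simp [Matrix.vandermonde_apply, mul_comm]
  rw [h]
  by_cases hij : i = j
  · subst hij
    rw [Lagrange.eval_basis_self hinj.injOn (mem_univ _), Matrix.one_apply_eq]
  · rw [Lagrange.eval_basis_of_ne (Ne.symm hij) (mem_univ _), Matrix.one_apply_ne hij]

lemma final_bound (m n : ℕ) (hm : 0 < m) (hmn : m ≤ n) :
    (m : ℝ) * (m * ((1 + (n - m : ℕ) * ((n : ℝ) ^ (n - m - 1) / (n - m - 1).factorial)) / n)) ≤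
      (n : ℝ) ^ (n - m + 2) / (n - m).factorial := by
  have hn : 0 < n := by omega
  have hnR : (1 : ℝ) ≤ n := by exact_mod_cast hn
  have hmR : (m : ℝ) ≤ n := by exact_mod_cast hmn
  obtain ⟨d, hd⟩ : ∃ d, n - m = d := ⟨_, rfl⟩
  rw [hd]
  rcases d with _ | e
  · have : m = n := by omega
    subst this
    simp
    field_simp
    nlinarith
  · have hfac : (e.factorial : ℝ) ≤ (n : ℝ) ^ e := by
      have h1 : e.factorial ≤ n ^ e :=
        (Nat.factorial_le_pow e).trans (Nat.pow_le_pow_left (by omega) e)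
      exact_mod_cast h1
    have hen : (e : ℝ) + 2 ≤ n := by exact_mod_cast (by omega : e + 2 ≤ n)
    have hf : (0 : ℝ) < e.factorial := by positivity
    have he0 : (0 : ℝ) ≤ e := by positivity
    simp only [Nat.add_sub_cancel, Nat.factorial_succ]
    push_cast
    rw [le_div_iff₀ (by positivity)]
    have hP : (0 : ℝ) ≤ (n : ℝ) ^ e := by positivity
    have h1 : (m : ℝ) * (m * ((1 + (e + 1) * ((n : ℝ) ^ e / e.factorial)) / n)) *
        ((e + 1) * e.factorial) =
        (m : ℝ) ^ 2 * (e + 1) * (e.factorial + (e + 1) * (n : ℝ) ^ e) / n := by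
      field_simp
    rw [h1, div_le_iff₀ (by positivity)]
    calc _ ≤ (n : ℝ) ^ 2 * n * ((n : ℝ) ^ e + (e + 1) * (n : ℝ) ^ e) := by
          gcongr; linarith
      _ = (n : ℝ) ^ 3 * (e + 2) * (n : ℝ) ^ e := by ring
      _ ≤ (n : ℝ) ^ 3 * n * (n : ℝ) ^ e := by gcongr
      _ = _ := by ring

end VandCond

/-- Let `m ≤ n` be positive integers and let `W` be the `m × m` Vandermonde matrix whose
evaluation points are distinct `n`-th roots of unity. Then, with `d = n − m`, the spectral
condition number satisfies `κ₂(W) = ‖W‖₂ ‖W⁻¹‖₂ ≤ n^{d+2} / d!`. -/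
theorem vandermonde_condition_number_le (m n : ℕ) (hm : 0 < m) (hmn : m ≤ n)
    (α : Fin m → ℂ) (hroot : ∀ i, α i ^ n = 1) (hinj : Function.Injective α) :
    ‖Matrix.vandermonde α‖ * ‖(Matrix.vandermonde α)⁻¹‖ ≤
      (n : ℝ) ^ (n - m + 2) / (Nat.factorial (n - m)) := by
  have hn : 0 < n := by omega
  have h1 : ‖Matrix.vandermonde α‖ ≤ m := by
    have := VandCond.norm_le_of_entries (Matrix.vandermonde α) 1 zero_le_one (fun i j ↦ by
      rw [Matrix.vandermonde_apply, norm_pow,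
        Complex.norm_eq_one_of_pow_eq_one (hroot i) hn.ne', one_pow])
    simpa using this
  have h2 := VandCond.norm_le_of_entries (Matrix.vandermonde α)⁻¹
    ((1 + (n - m : ℕ) * ((n : ℝ) ^ (n - m - 1) / (n - m - 1).factorial)) / n)
    (by positivity) (fun i j ↦ by
    rw [VandCond.inv_vandermonde m hm α hinj]
    exact VandCond.basis_coeff_bound m n hm hmn α hroot hinj i j)
  exact (mul_le_mul h1 h2 (norm_nonneg _) (by positivity)).trans
    (VandCond.final_bound m n hm hmn)
end

section
/- Let A₁, A₂ ∈ ℝ^{t×s} and B₁, B₂ ∈ ℝ^{s×r}, and consider the real matrices A = (A₁; A₂) ∈ ℝ^{2t×s} (vertical concatenation) and B = (B₁ B₂) ∈ ℝ^{s×2r} (horizontal concatenation). Define A' = A₁ + i·A₂ ∈ ℂ^{t×s} and B' = B₁ + i·B₂ ∈ ℂ^{s×r}. Then the product AB equals the 2×2 block matrix (1/2) · [[Re(A'B') + Re(A'·conj(B')), Im(A'B') − Im(A'·conj(B'))], [Im(A'B') + Im(A'·conj(B')), −Re(A'B') + Re(A'·conj(B'))]], where conj denotes entrywise complex conjugation and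 Re, Im are applied entrywise. -/
open Matrix

/-- Outer complexification: for real matrices `A = (A₁; A₂)` and `B = (B₁ B₂)`, with
`A' = A₁ + i A₂` and `B' = B₁ + i B₂`, the product `A B` equals the `2 × 2` block matrix
`(1/2) [[Re(A'B') + Re(A' conj(B')), Im(A'B') − Im(A' conj(B'))],
        [Im(A'B') + Im(A' conj(B')), −Re(A'B') + Re(A' conj(B'))]]`. -/
theorem outer_complexification (t s r : ℕ)
    (A₁ A₂ : Matrix (Fin t) (Fin s) ℝ) (B₁ B₂ : Matrix (Fin s) (Fin r) ℝ)
    (A' : Matrix (Fin t) (Fin s) ℂ) (B' : Matrix (Fin s) (Fin r) ℂ)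
    (hA' : A' = A₁.map (Complex.ofReal) + Complex.I • A₂.map (Complex.ofReal))
    (hB' : B' = B₁.map (Complex.ofReal) + Complex.I • B₂.map (Complex.ofReal)) :
    fromRows A₁ A₂ * fromCols B₁ B₂ =
      (1 / 2 : ℝ) • fromBlocks
        ((A' * B').map Complex.re + (A' * B'.map (starRingEnd ℂ)).map Complex.re)
        ((A' * B').map Complex.im - (A' * B'.map (starRingEnd ℂ)).map Complex.im)
        ((A' * B').map Complex.im + (A' * B'.map (starRingEnd ℂ)).map Complex.im)
        (-(A' * B').map Complex.re + (A' * B'.map (starRingEnd ℂ)).map Complex.re) := by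
  subst hA' hB'
  rw [fromRows_mul_fromCols, fromBlocks_smul]
  congr 1 <;> ext i j <;>
    simp [Matrix.mul_apply, Finset.sum_add_distrib, Finset.sum_sub_distrib] <;> ring
end
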